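/- Let k be an infinite field and A ≠ 0 a finitely generated k-algebra generated by x₁,…,xₙ. Then there exist elements y₁,…,y_r ∈ A, algebraically independent over k, such that A is integral over the subalgebra k[y₁,…,y_r]; moreover y₁,…,y_r can be chosen to be k-linear combinations of x₁,…,xₙ. -/

import Mathlib

/-!
If `x₀, …, xₙ` are not already algebraically independent, let `f ≠ 0` be a relation among them, of
degree `d` and with leading form `F`. Since `k` is infinite, some `c` satisfies `F(c) ≠ 0` and
`c₀ ≠ 0`. Put `t = x₀ / c₀` and `yᵢ = xᵢ - cᵢ t`, so that `y₀ = 0`. Then `f(y + c T)` is a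
polynomial in `T` of degree at most `d` with root `t`, and its coefficient of `T ^ d` is the
constant `F(c)`. So `t`, and with it every `xᵢ = yᵢ + cᵢ t`, is integral over `k[y₁, …, yₙ]`, and
induction on the number of generators applies to the `yᵢ`.
-/

section Substitution

open Polynomial

variable {σ k R : Type*} [CommSemiring k] [CommSemiring R] [Algebra k R] {g : σ → R[X]} {d n : ℕ}

theorem natDegree_aeval_le_of_totalDegree_le (hg : ∀ i, (g i).natDegree ≤ n)
    {φ : MvPolynomial σ k} (hφ : φ.totalDegree ≤ d) :
    (MvPolynomial.aeval g φ).natDegree ≤ d * n := by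
  rw [← MvPolynomial.aeval_map_algebraMap R]
  refine MvPolynomial.aeval_natDegree_le _ (le_trans ?_ hφ) g hg
  exact Finset.sup_mono (MvPolynomial.support_map_subset _ _)

theorem coeff_finsuppProd_pow_of_natDegree_le (hg : ∀ i, (g i).natDegree ≤ n) (s : σ →₀ ℕ) :
    (s.prod fun i e ↦ g i ^ e).coeff (s.degree * n) = s.prod fun i e ↦ (g i).coeff n ^ e := by
  have hdeg : ∀ p ∈ s.toMultiset.map g, p.natDegree ≤ n := by
    simpa using fun i _ ↦ hg i
  have hprod {M : Type _} [CommMonoid M] (h : σ → M) :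
      (s.toMultiset.map h).prod = s.prod fun i e ↦ h i ^ e := by
    rw [Finsupp.toMultiset_map, Finsupp.prod_toMultiset,
      Finsupp.prod_mapDomain_index pow_zero pow_add]
  have hcard : Multiset.card (s.toMultiset.map g) = s.degree := by
    rw [Multiset.card_map, Finsupp.card_toMultiset]
    rfl
  rw [← hprod, ← hprod, ← hcard, coeff_multiset_prod_of_natDegree_le _ n hdeg, Multiset.map_map]
  rfl

theorem coeff_aeval_of_totalDegree_le (hn : 0 < n) (hg : ∀ i, (g i).natDegree ≤ n)
    {φ : MvPolynomial σ k} (hφ : φ.totalDegree ≤ d) :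
    (MvPolynomial.aeval g φ).coeff (d * n) =
      MvPolynomial.aeval (fun i ↦ (g i).coeff n) (MvPolynomial.homogeneousComponent d φ) := by
  rw [MvPolynomial.homogeneousComponent_apply, Finset.sum_filter, map_sum]
  conv_lhs => rw [φ.as_sum, map_sum, finsetSum_coeff]
  refine Finset.sum_congr rfl fun s hs ↦ ?_
  split_ifs with hsd
  · rw [MvPolynomial.aeval_monomial, MvPolynomial.aeval_monomial, Polynomial.algebraMap_apply,
      coeff_C_mul, ← hsd, coeff_finsuppProd_pow_of_natDegree_le hg]
  · have hlt : s.degree < d :=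
      lt_of_le_of_ne ((MvPolynomial.le_totalDegree hs).trans hφ) hsd
    rw [map_zero]
    refine coeff_eq_zero_of_natDegree_lt (lt_of_le_of_lt ?_ (Nat.mul_lt_mul_of_pos_right hlt hn))
    exact natDegree_aeval_le_of_totalDegree_le hg (MvPolynomial.totalDegree_monomial_le _ _)

end Substitution

theorem homogeneousComponent_totalDegree_ne_zero {σ R : Type*} [CommSemiring R]
    {φ : MvPolynomial σ R} (hφ : φ ≠ 0) :
    MvPolynomial.homogeneousComponent φ.totalDegree φ ≠ 0 := by
  obtain ⟨s, hs, hsup⟩ := φ.support.exists_mem_eq_sup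
    (MvPolynomial.support_nonempty.mpr hφ) Finsupp.degree
  refine MvPolynomial.ne_zero_iff.mpr ⟨s, ?_⟩
  have hsd : s.degree = φ.totalDegree := hsup.symm
  rw [MvPolynomial.coeff_homogeneousComponent, if_pos hsd]
  exact MvPolynomial.mem_support_iff.mp hs

theorem exists_eval_ne_zero_and_apply_ne_zero {σ R : Type*} [CommRing R] [IsDomain R] [Infinite R]
    {φ : MvPolynomial σ R} (hφ : φ ≠ 0) (i : σ) :
    ∃ c : σ → R, MvPolynomial.eval c φ ≠ 0 ∧ c i ≠ 0 := by
  by_contra! h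
  refine mul_ne_zero hφ (MvPolynomial.X_ne_zero i) (MvPolynomial.funext fun c ↦ ?_)
  simpa [or_iff_not_imp_left] using h c

section Integrality

open Polynomial

theorem isIntegral_of_isUnit_coeff {R A : Type*} [CommRing R] [Ring A] [Algebra R A] {a : A}
    {p : R[X]} {d : ℕ} (hd : p.natDegree ≤ d) (hu : IsUnit (p.coeff d)) (ha : aeval a p = 0) :
    IsIntegral R a := by
  obtain ⟨u, hu⟩ := hu.exists_left_inv
  refine ⟨C u * p, monic_of_natDegree_le_of_coeff_eq_one d
    ((natDegree_C_mul_le _ _).trans hd) (by rw [coeff_C_mul, hu]), ?_⟩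
  rw [← aeval_def, map_mul, ha, mul_zero]

theorem isIntegral_of_aeval_add_smul_eq_zero {σ k R A : Type*} [CommSemiring k] [CommRing R]
    [CommRing A] [Algebra k R] [Algebra k A] [Algebra R A] [IsScalarTower k R A]
    {φ : MvPolynomial σ k} {b : σ → R} {c : σ → k} {t : A}
    (hc : IsUnit (MvPolynomial.eval c (MvPolynomial.homogeneousComponent φ.totalDegree φ)))
    (ht : MvPolynomial.aeval (fun i ↦ algebraMap R A (b i) + c i • t) φ = 0) :
    IsIntegral R t := by
  let g (i : σ) : R[X] := C (algebraMap k R (c i)) * X + C (b i)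
  have hg (i : σ) : (g i).natDegree ≤ 1 := natDegree_linear_le
  refine isIntegral_of_isUnit_coeff (p := MvPolynomial.aeval g φ)
    (natDegree_aeval_le_of_totalDegree_le hg le_rfl) ?_ ?_
  · have hcoeff : (fun i ↦ (g i).coeff 1) = algebraMap k R ∘ c := by
      ext i
      simp [g]
    rw [coeff_aeval_of_totalDegree_le one_pos hg le_rfl, hcoeff,
      MvPolynomial.aeval_algebraMap_apply]
    exact hc.map (algebraMap k R)
  · rw [← ht]
    have h : ((aeval t : R[X] →ₐ[R] A).restrictScalars k).comp (MvPolynomial.aeval g) =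
        MvPolynomial.aeval fun i ↦ algebraMap R A (b i) + c i • t := by
      ext i
      simp [g, Algebra.smul_def, add_comm, ← IsScalarTower.algebraMap_apply]
    exact DFunLike.congr_fun h φ

variable {k A : Type*} [CommRing k] [CommRing A] [Algebra k A]

theorem isIntegral_of_mem_subalgebra {S : Subalgebra k A} {a : A} (ha : a ∈ S) : IsIntegral S a :=
  isIntegral_algebraMap (x := (⟨a, ha⟩ : S))

theorem isIntegral_of_mem_adjoin {S : Subalgebra k A} {s : Set A} (hs : ∀ a ∈ s, IsIntegral S a)
    {a : A} (ha : a ∈ Algebra.adjoin k s) : IsIntegral S a :=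
  Algebra.adjoin_le (S := (integralClosure S A).restrictScalars k) hs ha

theorem isIntegral_subalgebra_trans {S T : Subalgebra k A} (hT : ∀ a ∈ T, IsIntegral S a) {a : A}
    (ha : IsIntegral T a) : IsIntegral S a := by
  have hle : T ≤ (integralClosure S A).restrictScalars k := hT
  have haS : IsIntegral (integralClosure S A) a :=
    ha.map_of_comp_eq (Subalgebra.inclusion hle).toRingHom (RingHom.id A) rfl
  exact isIntegral_trans a haS

end Integrality

theorem exists_mem_span_isIntegral_of_not_algebraicIndependent {k A ι : Type*} [Field k]
    [Infinite k] [CommRing A] [Algebra k A] {x : Option ι → A} (hx : ¬ AlgebraicIndependent k x) :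
    ∃ y : ι → A, (∀ i, y i ∈ Submodule.span k (Set.range x)) ∧
      ∀ j, IsIntegral (Algebra.adjoin k (Set.range y)) (x j) := by
  obtain ⟨f, hf, hf0⟩ : ∃ f : MvPolynomial (Option ι) k, MvPolynomial.aeval x f = 0 ∧ f ≠ 0 := by
    simpa [algebraicIndependent_iff] using hx
  obtain ⟨c, hcf, hc⟩ :=
    exists_eval_ne_zero_and_apply_ne_zero (homogeneousComponent_totalDegree_ne_zero hf0) none
  let t : A := (c none)⁻¹ • x none
  let y (i : ι) : A := x (some i) - c (some i) • t
  let b : Option ι → Algebra.adjoin k (Set.range y)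
    | none => 0
    | some i => ⟨y i, Algebra.subset_adjoin ⟨i, rfl⟩⟩
  have hxb : x = fun j ↦ algebraMap _ A (b j) + c j • t := by
    funext j
    cases j <;> simp [b, y, t, hc]
  have ht : IsIntegral (Algebra.adjoin k (Set.range y)) t :=
    isIntegral_of_aeval_add_smul_eq_zero hcf.isUnit (hxb ▸ hf)
  have hxspan (j : Option ι) : x j ∈ Submodule.span k (Set.range x) :=
    Submodule.subset_span ⟨j, rfl⟩
  refine ⟨y, fun i ↦ ?_, fun j ↦ ?_⟩
  · exact sub_mem (hxspan _) (Submodule.smul_mem _ _ (Submodule.smul_mem _ _ (hxspan none)))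
  · rw [hxb]
    exact isIntegral_algebraMap.add (ht.smul (c j))

theorem noether_normalization_linear_general {k A ι : Type*} [Field k] [Infinite k]
    [CommRing A] [Nontrivial A] [Algebra k A] [Finite ι] (x : ι → A) :
    ∃ (r : ℕ) (y : Fin r → A),
      AlgebraicIndependent k y ∧
      (∀ a ∈ Algebra.adjoin k (Set.range x), IsIntegral (Algebra.adjoin k (Set.range y)) a) ∧
      ∀ i, y i ∈ Submodule.span k (Set.range x) := by
  induction ι using Finite.induction_empty_option with
  | of_equiv e ih => simpa only [EquivLike.range_comp] using ih (x ∘ e)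
  | h_empty =>
    exact ⟨0, Fin.elim0, algebraicIndependent_empty_type,
      fun _ ↦ isIntegral_of_mem_adjoin (by simp), nofun⟩
  | @h_option ι _ ih =>
    by_cases hx : AlgebraicIndependent k x
    · obtain ⟨r, ⟨e⟩⟩ := Finite.exists_equiv_fin (Option ι)
      refine ⟨r, x ∘ e.symm, (algebraicIndependent_equiv e.symm).mpr hx, fun a ha ↦ ?_,
        fun i ↦ Submodule.subset_span ⟨_, rfl⟩⟩
      exact isIntegral_of_mem_subalgebra (by rwa [EquivLike.range_comp])
    · obtain ⟨z, hz, hxz⟩ := exists_mem_span_isIntegral_of_not_algebraicIndependent hx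
      obtain ⟨r, y, hy, hzy, hyz⟩ := ih z
      refine ⟨r, y, hy, fun a ha ↦ ?_, fun i ↦ ?_⟩
      · exact isIntegral_subalgebra_trans hzy
          (isIntegral_of_mem_adjoin (Set.forall_mem_range.mpr hxz) ha)
      · exact Submodule.span_le.mpr (Set.range_subset_iff.mpr hz) (hyz i)

/-- Noether's normalization lemma over an infinite field, with the
normalizing elements chosen to be linear combinations of the given generators:
if `A ≠ 0` is a `k`-algebra generated by `x₁,…,xₙ`, there are `y₁,…,y_r ∈ A`
algebraically independent over `k`, each a `k`-linear combination of the `x j`,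
such that `A` is integral over `k[y₁,…,y_r]`. -/
theorem noether_normalization_linear {k A : Type*} [Field k] [Infinite k]
    [CommRing A] [Nontrivial A] [Algebra k A]
    {n : ℕ} (x : Fin n → A)
    (hx : Algebra.adjoin k (Set.range x) = ⊤) :
    ∃ (r : ℕ) (y : Fin r → A),
      AlgebraicIndependent k y ∧
      (∀ a : A, IsIntegral (Algebra.adjoin k (Set.range y)) a) ∧
      (∀ i : Fin r, ∃ c : Fin n → k, y i = ∑ j, c j • x j) := by
  simpa [hx, Submodule.mem_span_range_iff_exists_fun, eq_comm] using
    noether_normalization_linear_general (k := k) x
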